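/- (Racah relation.) Let j⁽⁰⁾,…,j⁽⁴⁾ satisfy the inequalities and N := j⁽¹⁾+j⁽²⁾−j⁽³⁾+j⁽⁴⁾+j⁽⁰⁾ ∈ ℤ_{>0} as in the context, and assume the positivity conditions making the three families of orthonormalized Racah functions below well defined. Then for every integer 0 ≤ p ≤ N there exists ε ∈ {+1, −1} such that, for all integers 0 ≤ n, m ≤ N−p: Σ_{k₁=0}^{N−p} Σ_{k₂=0}^{N−p} (−1)^{k₁+k₂+m} · 𝒫_n(k₁; −2j⁽²⁾−1, −2j⁽¹⁾−1, p−N−1, N−p−2j⁽²⁾+2j⁽³⁾+1) · 𝒫_{k₁}(k₂; 2j⁽³⁾+1, −2j⁽²⁾−1, p−N−1, N−p−2j⁽¹⁾+2j⁽³⁾+1) · 𝒫_{k₂}(m; −2j⁽¹⁾−1, 2j⁽³⁾+1, p−N−1, N−p−2j⁽¹⁾−2j⁽²⁾−1) = ε·δ_{n,m}. -/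

import Mathlib

noncomputable section

open Finset Real

/-- Pochhammer symbol `(y)_k = y(y+1)⋯(y+k−1)` for real `y`. -/
def poch (y : ℝ) (k : ℕ) : ℝ := ∏ i ∈ Finset.range k, (y + i)

/-- The terminating Racah function `r_n(m; α, β, −𝒩−1, δ)` on the grid `{0,…,𝒩}`:
`r_n(m) = ∑_{k=0}^{n} (−n)_k (n+α+β+1)_k (−m)_k (m−𝒩+δ)_k /
  ((α+1)_k (β+δ+1)_k (−𝒩)_k k!)`. -/
def racah (𝒩 : ℕ) (α β δ : ℝ) (n m : ℕ) : ℝ :=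
  ∑ k ∈ Finset.range (n + 1),
    (poch (-(n : ℝ)) k * poch ((n : ℝ) + α + β + 1) k * poch (-(m : ℝ)) k *
        poch ((m : ℝ) - (𝒩 : ℝ) + δ) k) /
      (poch (α + 1) k * poch (β + δ + 1) k * poch (-(𝒩 : ℝ)) k * (Nat.factorial k : ℝ))

/-- Coefficient `A_n` of the Racah recurrence relation. -/
def coeffA (𝒩 : ℕ) (α β δ : ℝ) (n : ℕ) : ℝ :=
  ((n : ℝ) + α + 1) * ((n : ℝ) + β + δ + 1) * ((n : ℝ) - (𝒩 : ℝ)) * ((n : ℝ) + α + β + 1) /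
    ((2 * (n : ℝ) + α + β + 1) * (2 * (n : ℝ) + α + β + 2))

/-- Coefficient `C_n` of the Racah recurrence relation. -/
def coeffC (𝒩 : ℕ) (α β δ : ℝ) (n : ℕ) : ℝ :=
  (n : ℝ) * ((n : ℝ) + α + β + (𝒩 : ℝ) + 1) * ((n : ℝ) + α - δ) * ((n : ℝ) + β) /
    ((2 * (n : ℝ) + α + β) * (2 * (n : ℝ) + α + β + 1))

/-- Coefficient `B_m` of the Racah difference relation. -/
def coeffB (𝒩 : ℕ) (α β δ : ℝ) (m : ℕ) : ℝ :=
  ((m : ℝ) + α + 1) * ((m : ℝ) + β + δ + 1) * ((m : ℝ) - (𝒩 : ℝ)) * ((m : ℝ) - (𝒩 : ℝ) + δ) /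
    ((2 * (m : ℝ) - (𝒩 : ℝ) + δ) * (2 * (m : ℝ) - (𝒩 : ℝ) + δ + 1))

/-- Coefficient `D_m` of the Racah difference relation. -/
def coeffD (𝒩 : ℕ) (α β δ : ℝ) (m : ℕ) : ℝ :=
  (m : ℝ) * ((m : ℝ) - (𝒩 : ℝ) - 1 - α + δ) * ((m : ℝ) - (𝒩 : ℝ) - 1 - β) * ((m : ℝ) + δ) /
    ((2 * (m : ℝ) - (𝒩 : ℝ) - 1 + δ) * (2 * (m : ℝ) - (𝒩 : ℝ) + δ))

/-- Normalization constant `κ = (α−δ+1)_𝒩 (β+1)_𝒩 / ((α+β+2)_𝒩 (−δ)_𝒩)`. -/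
def kappa (𝒩 : ℕ) (α β δ : ℝ) : ℝ :=
  poch (α - δ + 1) 𝒩 * poch (β + 1) 𝒩 / (poch (α + β + 2) 𝒩 * poch (-δ) 𝒩)

/-- The orthonormalized Racah function `𝒫_n(m; α, β, −𝒩−1, δ)`. -/
def Pfun (𝒩 : ℕ) (α β δ : ℝ) (n m : ℕ) : ℝ :=
  Real.sqrt (kappa 𝒩 α β δ) *
    (∏ i ∈ Finset.range n,
      coeffA 𝒩 α β δ i / Real.sqrt (coeffA 𝒩 α β δ i * coeffC 𝒩 α β δ (i + 1))) *
    (∏ j ∈ Finset.range m,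
      coeffB 𝒩 α β δ j / Real.sqrt (coeffB 𝒩 α β δ j * coeffD 𝒩 α β δ (j + 1))) *
    racah 𝒩 α β δ n m

/-- The positivity conditions making `𝒫_·(·; α, β, −𝒩−1, δ)` well defined. -/
def PosCond (𝒩 : ℕ) (α β δ : ℝ) : Prop :=
  (∀ i < 𝒩, 0 < coeffA 𝒩 α β δ i * coeffC 𝒩 α β δ (i + 1)) ∧
  (∀ j < 𝒩, 0 < coeffB 𝒩 α β δ j * coeffD 𝒩 α β δ (j + 1)) ∧
  0 < kappa 𝒩 α β δ

/-!
Put `(α, β, δ) = (x, y, M + x + z + 1)`, so that exchanging degree and variable of a Racah function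
exchanges `y` and `z`, and the three families of the theorem are obtained from one another by
permuting `(x, y, z)` cyclically. Let `T(x, y, z)` be the symmetrized difference operator,
`Λ(s) = diag (i (i + s + 1))` and `S = diag ((-1) ^ i)`. By bispectrality the matrix `U` of
orthonormalized Racah functions satisfies `U T(x, y, z) = Λ(x + y) U` and
`U Λ(x + z) = T(x, z, y) U`. As `T(x, y, z) + S T(z, y, x) S + Λ(x + z)` is a scalar matrix, `U S`
intertwines three operators with three others, and going once around the cycle of parameters gives
a matrix commuting with both `Λ(x + y)` and `T(x, z, y)`. The first has simple spectrum and the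
second is tridiagonal with nonzero off-diagonal entries, so this matrix is a scalar `ε`. The same
argument shows that `Uᵀ U` is a scalar, which the summation of a very-well-poised `₅F₄` identifies
as `1`; hence `ε ^ 2 = 1`.
-/

lemma poch_zero (y : ℝ) : poch y 0 = 1 := Finset.prod_range_zero _

lemma poch_succ (y : ℝ) (k : ℕ) : poch y (k + 1) = poch y k * (y + k) :=
  Finset.prod_range_succ _ _

lemma poch_succ_left (y : ℝ) (k : ℕ) : poch y (k + 1) = y * poch (y + 1) k := by
  simp only [poch, Finset.prod_range_succ', Nat.cast_zero, add_zero, mul_comm y, Nat.cast_succ,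
    add_assoc, add_comm (1 : ℝ)]

lemma poch_ne_zero_iff {y : ℝ} {k : ℕ} : poch y k ≠ 0 ↔ ∀ t < k, y + t ≠ 0 := by
  simp only [poch, Finset.prod_ne_zero_iff, Finset.mem_range]

lemma poch_ne_zero_of_le {y : ℝ} {j k : ℕ} (h : poch y k ≠ 0) (hjk : j ≤ k) : poch y j ≠ 0 :=
  poch_ne_zero_iff.2 fun t ht ↦ poch_ne_zero_iff.1 h t (ht.trans_le hjk)

lemma ne_zero_of_poch_ne_zero {y : ℝ} {k : ℕ} (h : poch y (k + 1) ≠ 0) : y ≠ 0 := by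
  simpa using poch_ne_zero_iff.1 h 0 k.succ_pos

lemma poch_one_add_add_ne_zero {a : ℝ} {M k n : ℕ} (ha : poch a n ≠ 0) (hn : M + k < n) :
    poch (1 + a + M) k ≠ 0 := by
  refine poch_ne_zero_iff.2 fun t ht ↦ ?_
  have := poch_ne_zero_iff.1 ha (1 + M + t) (by omega)
  push_cast at this
  convert this using 1
  ring

lemma poch_neg_natCast_eq_zero {n k : ℕ} (h : n < k) : poch (-(n : ℝ)) k = 0 :=
  Finset.prod_eq_zero (Finset.mem_range.2 h) (neg_add_cancel _)

lemma poch_neg_natCast_ne_zero {n k : ℕ} (h : k ≤ n) : poch (-(n : ℝ)) k ≠ 0 :=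
  poch_ne_zero_iff.2 fun t ht ↦ by
    have : (t : ℝ) < n := mod_cast ht.trans_le h
    linarith

lemma poch_reflect (y : ℝ) (k : ℕ) : poch (-y - k) k = (-1) ^ k * poch (y + 1) k := by
  rw [poch, ← Finset.prod_range_reflect, poch, ← Finset.card_range k, ← Finset.prod_const,
    Finset.card_range, ← Finset.prod_mul_distrib]
  refine Finset.prod_congr rfl fun i hi ↦ ?_
  have hik : 1 + i ≤ k := by have := Finset.mem_range.1 hi; omega
  rw [Nat.sub_sub, Nat.cast_sub hik]
  push_cast
  ring

section Commutant

variable {R : Type*} [CommRing R] [IsDomain R]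

lemma isDiag_of_commute_diagonal {ι : Type*} [Fintype ι] [DecidableEq ι] {l : ι → R}
    (hl : Function.Injective l) {X : Matrix ι ι R} (hX : Commute (Matrix.diagonal l) X) :
    X.IsDiag := by
  intro i j hij
  have hentry : l i * X i j = X i j * l j := by
    simpa only [Matrix.diagonal_mul, Matrix.mul_diagonal] using congrFun₂ hX.eq i j
  have hzero : (l i - l j) * X i j = 0 := by linear_combination hentry
  exact (mul_eq_zero.1 hzero).resolve_left (sub_ne_zero.2 (hl.ne hij))

lemma eq_smul_one_of_commute {M : ℕ} {l : Fin (M + 1) → R} (hl : Function.Injective l)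
    {T X : Matrix (Fin (M + 1)) (Fin (M + 1)) R} (hT : ∀ i : Fin M, T i.castSucc i.succ ≠ 0)
    (hlX : Commute (Matrix.diagonal l) X) (hTX : Commute T X) : X = X 0 0 • 1 := by
  have hdiag := (isDiag_of_commute_diagonal hl hlX).diagonal_diag
  have hstep (i : Fin M) : X i.succ i.succ = X i.castSucc i.castSucc := by
    have hentry := congrFun₂ hTX.eq i.castSucc i.succ
    rw [← hdiag, Matrix.mul_diagonal, Matrix.diagonal_mul, mul_comm] at hentry
    exact mul_right_cancel₀ (hT i) hentry
  have hconst (i : Fin (M + 1)) : X i i = X 0 0 := by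
    induction i using Fin.induction with
    | zero => rfl
    | succ i ih => rw [hstep, ih]
  rw [Matrix.smul_one_eq_diagonal, ← hdiag]
  exact congrArg Matrix.diagonal (funext hconst)

end Commutant

section JacobiMatrix

variable {M : ℕ} {B D : ℕ → ℝ}

/-- The symmetric tridiagonal matrix with diagonal entries `-(B i + D i)` and off-diagonal entries
`√(B i * D (i + 1))`. It symmetrizes the birth–death generator
`f ↦ B i * (f (i + 1) - f i) + D i * (f (i - 1) - f i)` on `{0, …, M}`. -/
def jacobiMatrix (M : ℕ) (B D : ℕ → ℝ) : Matrix (Fin (M + 1)) (Fin (M + 1)) ℝ :=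
  Matrix.of fun i j ↦ (if (i : ℕ) = j then -(B i + D i) else 0) +
    (if (i : ℕ) + 1 = j then √(B i * D j) else 0) + (if (j : ℕ) + 1 = i then √(B j * D i) else 0)

/-- The square root of the reversible weight of the birth–death generator with rates `B`, `D`;
conjugation by it turns the generator into `jacobiMatrix M B D`. -/
def symmetrizer (B D : ℕ → ℝ) (n : ℕ) : ℝ :=
  ∏ j ∈ Finset.range n, B j / √(B j * D (j + 1))

lemma jacobiMatrix_isSymm : (jacobiMatrix M B D).IsSymm := by
  ext i j
  simp only [jacobiMatrix, Matrix.transpose_apply, Matrix.of_apply, add_right_comm]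
  congr 2
  by_cases h : (i : ℕ) = j
  · simp [h]
  · simp [h, Ne.symm h]

lemma jacobiMatrix_castSucc_succ (i : Fin M) :
    jacobiMatrix M B D i.castSucc i.succ = √(B i * D (i + 1)) := by
  simp [jacobiMatrix, add_assoc]

lemma sqrt_mul_symmetrizer_succ {i : ℕ} (h : 0 < B i * D (i + 1)) :
    √(B i * D (i + 1)) * symmetrizer B D (i + 1) = B i * symmetrizer B D i := by
  have := (Real.sqrt_pos.2 h).ne'
  rw [symmetrizer, Finset.prod_range_succ, ← symmetrizer]
  field_simp

lemma sqrt_mul_symmetrizer {i : ℕ} (h : 0 < B i * D (i + 1)) :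
    √(B i * D (i + 1)) * symmetrizer B D i = D (i + 1) * symmetrizer B D (i + 1) := by
  refine mul_left_cancel₀ (left_ne_zero_of_mul h.ne') ?_
  linear_combination symmetrizer B D (i + 1) * Real.mul_self_sqrt h.le -
    √(B i * D (i + 1)) * sqrt_mul_symmetrizer_succ h

lemma symmetrizer_succ_sq {n : ℕ} (h : 0 < B n * D (n + 1)) :
    symmetrizer B D (n + 1) ^ 2 = symmetrizer B D n ^ 2 * (B n / D (n + 1)) := by
  have hD := right_ne_zero_of_mul h.ne'
  field_simp
  linear_combination symmetrizer B D n * sqrt_mul_symmetrizer_succ h -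
    symmetrizer B D (n + 1) * sqrt_mul_symmetrizer h

lemma jacobiMatrix_mulVec (hB : B M = 0) (hD : D 0 = 0) (f : ℕ → ℝ) (i : Fin (M + 1)) :
    (jacobiMatrix M B D).mulVec (fun j ↦ f j) i = -(B i + D i) * f i +
      √(B i * D (i + 1)) * f (i + 1) + √(B (i - 1) * D i) * f (i - 1) := by
  obtain ⟨i, hi⟩ := i
  have hbelow : ∑ j ∈ Finset.range (M + 1), (if j + 1 = i then √(B j * D i) * f j else 0) =
      √(B (i - 1) * D i) * f (i - 1) := by
    cases i with
    | zero => simp [hD]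
    | succ k => simp [Finset.sum_ite_eq', show k < M + 1 by omega]
  have habove : ∑ j ∈ Finset.range (M + 1), (if i + 1 = j then √(B i * D j) * f j else 0) =
      √(B i * D (i + 1)) * f (i + 1) := by
    rcases (Nat.lt_succ_iff.1 hi).lt_or_eq with hlt | rfl
    · simp [hlt]
    · simp [hB]
  simp only [Matrix.mulVec, dotProduct, jacobiMatrix, Matrix.of_apply, add_mul, ite_mul, zero_mul]
  rw [Fin.sum_univ_eq_sum_range (fun j ↦ (if i = j then -(B i + D i) * f j else 0) +
    (if i + 1 = j then √(B i * D j) * f j else 0) + (if j + 1 = i then √(B j * D i) * f j else 0)),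
    Finset.sum_add_distrib, Finset.sum_add_distrib, habove, hbelow, Finset.sum_ite_eq,
    if_pos (Finset.mem_range.2 hi)]

lemma jacobiMatrix_mulVec_symmetrizer (hB : B M = 0) (hD : D 0 = 0)
    (hpos : ∀ i < M, 0 < B i * D (i + 1)) (f : ℕ → ℝ) (i : Fin (M + 1)) :
    (jacobiMatrix M B D).mulVec (fun j ↦ symmetrizer B D j * f j) i =
      symmetrizer B D i * (B i * (f (i + 1) - f i) + D i * (f (i - 1) - f i)) := by
  rw [jacobiMatrix_mulVec hB hD (fun j ↦ symmetrizer B D j * f j)]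
  obtain ⟨i, hi⟩ := i
  have habove : √(B i * D (i + 1)) * (symmetrizer B D (i + 1) * f (i + 1)) =
      B i * symmetrizer B D i * f (i + 1) := by
    rcases (Nat.lt_succ_iff.1 hi).lt_or_eq with hlt | rfl
    · rw [← mul_assoc, sqrt_mul_symmetrizer_succ (hpos i hlt)]
    · simp [hB]
  have hbelow : √(B (i - 1) * D i) * (symmetrizer B D (i - 1) * f (i - 1)) =
      D i * symmetrizer B D i * f (i - 1) := by
    cases i with
    | zero => simp [hD]
    | succ k => rw [Nat.add_sub_cancel, ← mul_assoc, sqrt_mul_symmetrizer (hpos k (by omega))]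
  simp only [habove, hbelow]
  ring

/-- The diagonal matrix with entries `(-1) ^ i`. -/
def altSign (M : ℕ) : Matrix (Fin (M + 1)) (Fin (M + 1)) ℝ :=
  Matrix.diagonal fun i ↦ (-1) ^ (i : ℕ)

lemma altSign_mul_self : altSign M * altSign M = 1 := by
  simp [altSign, ← mul_pow]

lemma altSign_mem_orthogonalGroup : altSign M ∈ Matrix.orthogonalGroup (Fin (M + 1)) ℝ := by
  rw [Matrix.mem_orthogonalGroup_iff, altSign, Matrix.diagonal_transpose]
  exact altSign_mul_self

lemma jacobiMatrix_add_altSign_conj {B' D' : ℕ → ℝ}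
    (h : ∀ i < M, B i * D (i + 1) = B' i * D' (i + 1)) :
    jacobiMatrix M B D + altSign M * jacobiMatrix M B' D' * altSign M =
      Matrix.diagonal fun i : Fin (M + 1) ↦ -(B i + D i + (B' i + D' i)) := by
  ext i j
  have hsq (k : ℕ) : (-1 : ℝ) ^ k * (-1) ^ k = 1 := by rw [← mul_pow]; simp
  simp only [Matrix.add_apply, altSign, Matrix.mul_diagonal, Matrix.diagonal_mul, jacobiMatrix,
    Matrix.of_apply, Matrix.diagonal_apply, Fin.ext_iff]
  obtain ⟨i, hi⟩ := i
  obtain ⟨j, hj⟩ := j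
  rcases eq_or_ne i j with rfl | hij
  · simp only [if_true, Nat.add_eq_left, one_ne_zero, if_false, add_zero]
    linear_combination -(B' i + D' i) * hsq i
  rcases eq_or_ne (i + 1) j with rfl | hij'
  · simp only [hij, if_false, if_true, h i (by omega), show i + 1 + 1 ≠ i by omega, pow_succ]
    linear_combination -√(B' i * D' (i + 1)) * hsq i
  rcases eq_or_ne (j + 1) i with rfl | hji'
  · simp only [hij, if_false, if_true, h j (by omega), show j + 1 + 1 ≠ j by omega, pow_succ]
    linear_combination -√(B' j * D' (j + 1)) * hsq j
  · simp [hij, hij', hji']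

end JacobiMatrix

/-- The coefficient `B_m` of the Racah difference relation in the parameters
`(α, β, δ) = (x, y, M + x + z + 1)`, in which exchanging degree and variable exchanges `y` and `z`;
`A_n` is then `racahBirth M x z y n`. -/
def racahBirth (M : ℕ) (x y z : ℝ) (m : ℕ) : ℝ :=
  (m + x + 1) * (m + x + y + z + M + 2) * (m - M) * (m + x + z + 1) /
    ((2 * m + x + z + 1) * (2 * m + x + z + 2))

/-- The coefficient `D_m` of the Racah difference relation in the parameters
`(α, β, δ) = (x, y, M + x + z + 1)`; `C_n` is then `racahDeath M x z y n`. -/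
def racahDeath (M : ℕ) (x y z : ℝ) (m : ℕ) : ℝ :=
  m * (m + z) * (m - M - 1 - y) * (m + M + x + z + 1) /
    ((2 * m + x + z) * (2 * m + x + z + 1))

/-- The polynomial `(-v)_k (v + u)_k`, of degree `k` in the quadratic lattice `v (v + u)`. -/
def latticeBasis (u : ℝ) (k : ℕ) (v : ℝ) : ℝ := poch (-v) k * poch (v + u) k

/-- The coefficient of `latticeBasis (x + z + 1) k` in the Racah function of degree `w`. -/
def racahCoeff (M : ℕ) (x y z w : ℝ) (k : ℕ) : ℝ :=
  latticeBasis (x + y + 1) k w /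
    (poch (x + 1) k * poch (x + y + z + M + 2) k * poch (-(M : ℝ)) k * k.factorial)

/-- The Racah function in the parameters `(α, β, δ) = (x, y, M + x + z + 1)`, with real degree `w`
and real variable `v`; summing up to `M` rather than the degree makes it symmetric. -/
def racahFun (M : ℕ) (x y z w v : ℝ) : ℝ :=
  ∑ k ∈ Finset.range (M + 1), racahCoeff M x y z w k * latticeBasis (x + z + 1) k v

section DifferenceEquation

variable {M : ℕ} {x y z : ℝ}

lemma coeffB_eq_racahBirth (m : ℕ) : coeffB M x y (M + x + z + 1) m = racahBirth M x y z m := by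
  unfold coeffB racahBirth
  congr 1 <;> ring

lemma coeffD_eq_racahDeath (m : ℕ) : coeffD M x y (M + x + z + 1) m = racahDeath M x y z m := by
  unfold coeffD racahDeath
  congr 1 <;> ring

lemma coeffA_eq_racahBirth (n : ℕ) : coeffA M x y (M + x + z + 1) n = racahBirth M x z y n := by
  unfold coeffA racahBirth
  congr 1
  ring

lemma coeffC_eq_racahDeath (n : ℕ) : coeffC M x y (M + x + z + 1) n = racahDeath M x z y n := by
  unfold coeffC racahDeath
  congr 1
  ring

lemma racahBirth_self : racahBirth M x y z M = 0 := by simp [racahBirth]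

lemma racahDeath_zero : racahDeath M x y z 0 = 0 := by simp [racahDeath]

lemma latticeBasis_zero (u v : ℝ) : latticeBasis u 0 v = 1 := by simp [latticeBasis, poch_zero]

lemma latticeBasis_natCast_eq_zero (u : ℝ) {n k : ℕ} (h : n < k) : latticeBasis u k n = 0 := by
  rw [latticeBasis, poch_neg_natCast_eq_zero h, zero_mul]

lemma latticeBasis_succ (u : ℝ) (k : ℕ) (v : ℝ) :
    latticeBasis u (k + 1) v = latticeBasis u k v * ((k - v) * (k + v + u)) := by
  simp only [latticeBasis, poch_succ]
  ring

lemma mul_latticeBasis_forward_diff (u : ℝ) (j : ℕ) (v : ℝ) :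
    (v + u) * (latticeBasis u (j + 1) (v + 1) - latticeBasis u (j + 1) v) =
      -(j + 1) * (2 * v + u + 1) * (latticeBasis u j v * (v + u + j)) := by
  have hleft : poch (-(v + 1)) (j + 1) = -(v + 1) * poch (-v) j := by
    rw [poch_succ_left, neg_add, neg_add_cancel_right]
  have hright : poch (v + u) j * (v + u + j) = (v + u) * poch (v + 1 + u) j := by
    rw [← poch_succ, poch_succ_left, add_right_comm]
  simp only [latticeBasis, hleft, poch_succ]
  linear_combination (v + 1) * (v + 1 + u + j) * poch (-v) j * hright

lemma mul_latticeBasis_backward_diff (u : ℝ) (j : ℕ) (v : ℝ) :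
    v * (latticeBasis u (j + 1) (v - 1) - latticeBasis u (j + 1) v) =
      -(j + 1) * (2 * v + u - 1) * (latticeBasis u j v * (j - v)) := by
  have hleft : poch (-v) j * (-v + j) = -v * poch (-(v - 1)) j := by
    rw [← poch_succ, poch_succ_left, neg_sub', sub_neg_eq_add]
  have hright : poch (v - 1 + u) (j + 1) = (v - 1 + u) * poch (v + u) j := by
    rw [poch_succ_left, sub_add_eq_add_sub, sub_add_cancel]
  simp only [latticeBasis, hright, poch_succ]
  linear_combination (j - v + 1) * (v - 1 + u) * poch (v + u) j * hleft

lemma racahFun_swap (w v : ℝ) : racahFun M x y z w v = racahFun M x z y v w := by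
  refine Finset.sum_congr rfl fun k _ ↦ ?_
  rw [racahCoeff, racahCoeff, add_right_comm x y z]
  ring

lemma racah_eq_racahFun {n : ℕ} (m : ℕ) (hn : n ≤ M) :
    racah M x y (M + x + z + 1) n m = racahFun M x y z n m := by
  rw [racah, racahFun, ← Finset.sum_subset (Finset.range_mono (Nat.succ_le_succ hn))]
  · refine Finset.sum_congr rfl fun k _ ↦ ?_
    rw [racahCoeff, latticeBasis, latticeBasis, show (n : ℝ) + x + y + 1 = n + (x + y + 1) by ring,
      show (m : ℝ) - M + (M + x + z + 1) = m + (x + z + 1) by ring,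
      show y + (M + x + z + 1) + 1 = x + y + z + (M : ℝ) + 2 by ring]
    ring
  · intro k _ hk
    rw [racahCoeff, latticeBasis_natCast_eq_zero _ (by simpa [Nat.succ_le_iff] using hk), zero_div,
      zero_mul]

lemma racahFun_zero_right (w : ℝ) : racahFun M x y z w 0 = 1 := by
  have hpos (k : ℕ) : latticeBasis (x + z + 1) (k + 1) 0 = 0 := mod_cast
    latticeBasis_natCast_eq_zero (x + z + 1) k.succ_pos
  simp [racahFun, Finset.sum_range_succ', hpos, racahCoeff, latticeBasis_zero, poch_zero]

lemma two_mul_add_ne_zero (hxz : poch (x + z + 1) (2 * M + 1) ≠ 0) {m : ℕ} (hm : m ≤ M) :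
    2 * m + x + z + 1 ≠ 0 := by
  have := poch_ne_zero_iff.1 hxz (2 * m) (by omega)
  push_cast at this
  convert this using 1
  ring

lemma two_mul_add_ne_zero_of_lt (hxz : poch (x + z + 1) (2 * M + 1) ≠ 0) {m : ℕ} (hm : m < M) :
    2 * m + x + z + 2 ≠ 0 := by
  have := poch_ne_zero_iff.1 hxz (2 * m + 1) (by omega)
  push_cast at this
  convert this using 1
  ring

lemma two_mul_add_ne_zero_of_pos (hxz : poch (x + z + 1) (2 * M + 1) ≠ 0) {m : ℕ} (hpos : 0 < m)
    (hm : m ≤ M) : 2 * m + x + z ≠ 0 := by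
  have := two_mul_add_ne_zero_of_lt hxz (Nat.sub_one_lt_of_le hpos hm)
  rw [Nat.cast_pred hpos] at this
  convert this using 1
  ring

lemma racahBirth_mul_latticeBasis_diff (hxz : poch (x + z + 1) (2 * M + 1) ≠ 0) (j : ℕ) {m : ℕ}
    (hm : m ≤ M) :
    racahBirth M x y z m *
        (latticeBasis (x + z + 1) (j + 1) (m + 1) - latticeBasis (x + z + 1) (j + 1) m) =
      -(j + 1) * ((m + x + 1) * (m + x + y + z + M + 2) * (m - M)) / (2 * m + x + z + 1) *
        (latticeBasis (x + z + 1) j m * (m + (x + z + 1) + j)) := by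
  rcases hm.lt_or_eq with hlt | rfl
  · have h₁ := two_mul_add_ne_zero hxz hm
    have h₂ := two_mul_add_ne_zero_of_lt hxz hlt
    rw [racahBirth, div_mul_eq_mul_div, div_mul_eq_mul_div, div_eq_div_iff (mul_ne_zero h₁ h₂) h₁]
    linear_combination (m + x + 1) * (m + x + y + z + M + 2) * (m - M) * (2 * m + x + z + 1) *
      mul_latticeBasis_forward_diff (x + z + 1) j m
  · simp [racahBirth_self]

lemma racahDeath_mul_latticeBasis_diff (hxz : poch (x + z + 1) (2 * M + 1) ≠ 0) (j : ℕ) {m : ℕ}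
    (hm : m ≤ M) :
    racahDeath M x y z m *
        (latticeBasis (x + z + 1) (j + 1) (m - 1) - latticeBasis (x + z + 1) (j + 1) m) =
      -(j + 1) * ((m + z) * (m - M - 1 - y) * (m + M + x + z + 1)) / (2 * m + x + z + 1) *
        (latticeBasis (x + z + 1) j m * (j - m)) := by
  rcases m.eq_zero_or_pos with rfl | hpos
  · have hzero : latticeBasis (x + z + 1) j (0 : ℕ) * (j - (0 : ℕ)) = 0 := by
      rcases j.eq_zero_or_pos with rfl | hj
      · simp
      · rw [latticeBasis_natCast_eq_zero _ hj, zero_mul]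
    rw [racahDeath_zero, hzero, zero_mul, mul_zero]
  · have h₁ := two_mul_add_ne_zero hxz hm
    have h₀ := two_mul_add_ne_zero_of_pos hxz hpos hm
    rw [racahDeath, div_mul_eq_mul_div, div_mul_eq_mul_div, div_eq_div_iff (mul_ne_zero h₀ h₁) h₁]
    linear_combination (m + z) * (m - M - 1 - y) * (m + M + x + z + 1) * (2 * m + x + z + 1) *
      mul_latticeBasis_backward_diff (x + z + 1) j m

/-- The Racah difference operator `f ↦ B_m (f (m + 1) - f m) + D_m (f (m - 1) - f m)`, acting on
functions of a real variable so that the term `m - 1` makes sense at `m = 0`. -/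
def racahOperator (M : ℕ) (x y z : ℝ) (m : ℕ) : (ℝ → ℝ) →ₗ[ℝ] ℝ where
  toFun f := racahBirth M x y z m * (f (m + 1) - f m) + racahDeath M x y z m * (f (m - 1) - f m)
  map_add' f g := by simp only [Pi.add_apply]; ring
  map_smul' c f := by simp only [Pi.smul_apply, smul_eq_mul, RingHom.id_apply]; ring

lemma racahOperator_latticeBasis_succ (hxz : poch (x + z + 1) (2 * M + 1) ≠ 0) (j : ℕ) {m : ℕ}
    (hm : m ≤ M) :
    racahOperator M x y z m (latticeBasis (x + z + 1) (j + 1)) =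
      (j + 1) * (j + 1 + (x + y + 1)) * latticeBasis (x + z + 1) (j + 1) m -
        (j + 1) * (j + 1 + x) * (j + x + y + z + M + 2) * (j - M) *
          latticeBasis (x + z + 1) j m := by
  have h₁ := two_mul_add_ne_zero hxz hm
  simp only [racahOperator, LinearMap.coe_mk, AddHom.coe_mk]
  rw [racahBirth_mul_latticeBasis_diff hxz j hm, racahDeath_mul_latticeBasis_diff hxz j hm,
    latticeBasis_succ]
  rw [div_mul_eq_mul_div, div_mul_eq_mul_div, ← add_div, div_eq_iff h₁]
  ring

lemma racahOperator_latticeBasis_zero (m : ℕ) :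
    racahOperator M x y z m (latticeBasis (x + z + 1) 0) = 0 := by
  simp [racahOperator, latticeBasis_zero]

lemma racahCoeff_succ (hx : poch (x + 1) M ≠ 0) (hxyz : poch (x + y + z + M + 2) M ≠ 0) (w : ℝ)
    {k : ℕ} (hk : k < M) :
    racahCoeff M x y z w (k + 1) *
        ((k + 1) * (k + 1 + x) * (k + x + y + z + M + 2) * (k - M)) =
      racahCoeff M x y z w k * ((k - w) * (k + w + (x + y + 1))) := by
  have hx' := poch_ne_zero_of_le hx (Nat.succ_le_of_lt hk)
  have hxyz' := poch_ne_zero_of_le hxyz (Nat.succ_le_of_lt hk)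
  have hM := poch_neg_natCast_ne_zero (Nat.succ_le_of_lt hk)
  rw [Nat.succ_eq_add_one, poch_succ, mul_ne_zero_iff] at hx' hxyz' hM
  obtain ⟨hx₁, hx₂⟩ := hx'
  obtain ⟨hxyz₁, hxyz₂⟩ := hxyz'
  obtain ⟨hM₁, hM₂⟩ := hM
  have hk₁ : (k : ℝ) + 1 ≠ 0 := by positivity
  have hfact : (k.factorial : ℝ) ≠ 0 := by positivity
  simp only [racahCoeff, latticeBasis_succ, poch_succ, Nat.factorial_succ, Nat.cast_mul,
    Nat.cast_succ]
  field_simp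
  ring

lemma racahCoeff_top_mul_eq_zero {n : ℕ} (hn : n ≤ M) :
    racahCoeff M x y z n M * ((M - n) * (M + n + (x + y + 1))) = 0 := by
  rcases hn.lt_or_eq with hlt | rfl
  · rw [racahCoeff, latticeBasis_natCast_eq_zero _ hlt, zero_div, zero_mul]
  · rw [sub_self, zero_mul, mul_zero]

theorem racahOperator_racahFun (hxz : poch (x + z + 1) (2 * M + 1) ≠ 0) (hx : poch (x + 1) M ≠ 0)
    (hxyz : poch (x + y + z + M + 2) M ≠ 0) {n m : ℕ} (hn : n ≤ M) (hm : m ≤ M) :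
    racahOperator M x y z m (racahFun M x y z n) =
      n * (n + (x + y + 1)) * racahFun M x y z n m := by
  set c := racahCoeff M x y z n
  set φ := latticeBasis (x + z + 1)
  have hexpand : racahFun M x y z n = ∑ k ∈ Finset.range (M + 1), c k • φ k := by
    ext v
    simp only [racahFun, Finset.sum_apply, Pi.smul_apply, smul_eq_mul, c, φ]
  have hlower : ∑ k ∈ Finset.range M, c (k + 1) *
        ((k + 1) * (k + 1 + x) * (k + x + y + z + M + 2) * (k - M)) * φ k m =
      ∑ k ∈ Finset.range (M + 1), c k * ((k - n) * (k + n + (x + y + 1))) * φ k m := by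
    rw [Finset.sum_range_succ, racahCoeff_top_mul_eq_zero hn, zero_mul, add_zero]
    exact Finset.sum_congr rfl fun k hk ↦ by
      rw [racahCoeff_succ hx hxyz n (Finset.mem_range.1 hk)]
  calc racahOperator M x y z m (racahFun M x y z n)
      = ∑ k ∈ Finset.range (M + 1), c k * racahOperator M x y z m (φ k) := by
        simp only [hexpand, map_sum, map_smul, smul_eq_mul]
    _ = ∑ k ∈ Finset.range (M + 1), c k * (k * (k + (x + y + 1))) * φ k m -
        ∑ k ∈ Finset.range M, c (k + 1) *
          ((k + 1) * (k + 1 + x) * (k + x + y + z + M + 2) * (k - M)) * φ k m := by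
        simp only [Finset.sum_range_succ', φ, racahOperator_latticeBasis_zero,
          racahOperator_latticeBasis_succ hxz _ hm, Nat.cast_zero, zero_mul, mul_zero, add_zero,
          ← Finset.sum_sub_distrib]
        exact Finset.sum_congr rfl fun k _ ↦ by push_cast; ring
    _ = n * (n + (x + y + 1)) * racahFun M x y z n m := by
        rw [hlower, racahFun, Finset.mul_sum, ← Finset.sum_sub_distrib]
        exact Finset.sum_congr rfl fun k _ ↦ by ring

end DifferenceEquation

section VeryWellPoised

variable {a b c : ℝ} {M : ℕ}

/-- The `n`-th term of the terminating very-well-poised series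
`₅F₄(a, a/2 + 1, b, c, -M; a/2, 1 + a - b, 1 + a - c, 1 + a + M; 1)`. -/
def veryWellPoisedTerm (a b c : ℝ) (M n : ℕ) : ℝ :=
  (2 * n + a) / a * (poch a n * poch b n * poch c n * poch (-(M : ℝ)) n) /
    (n.factorial * poch (1 + a - b) n * poch (1 + a - c) n * poch (1 + a + M) n)

/-- The certificate telescoping, in Zeilberger's sense, the recurrence in `M` satisfied by
`veryWellPoisedTerm`. -/
def veryWellPoisedCert (a b c : ℝ) (M n : ℕ) : ℝ :=
  (1 + a + M) / a * (poch a (n + 1) * poch b (n + 1) * poch c (n + 1) * poch (-(M : ℝ)) n) /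
    (n.factorial * poch (1 + a - b) n * poch (1 + a - c) n * poch (1 + a + M) (n + 1))

lemma veryWellPoisedTerm_zero (ha : a ≠ 0) : veryWellPoisedTerm a b c M 0 = 1 := by
  simp [veryWellPoisedTerm, poch_zero, ha]

lemma veryWellPoisedTerm_eq_zero {n : ℕ} (hn : M < n) : veryWellPoisedTerm a b c M n = 0 := by
  simp [veryWellPoisedTerm, poch_neg_natCast_eq_zero hn]

lemma veryWellPoisedTerm_succ (ha : poch a (2 * M + 1) ≠ 0) (hb : poch (1 + a - b) M ≠ 0)
    (hc : poch (1 + a - c) M ≠ 0) {n : ℕ} (hn : n < M) :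
    veryWellPoisedTerm a b c M (n + 1) = veryWellPoisedTerm a b c M n *
      ((a + n) * (b + n) * (c + n) * (n - M) * (2 * n + a + 2) /
        ((n + 1) * (1 + a - b + n) * (1 + a - c + n) * (1 + a + M + n) * (2 * n + a))) := by
  have ha₀ := ne_zero_of_poch_ne_zero ha
  have hn₁ : (n : ℝ) + 1 ≠ 0 := by positivity
  have hfact : (n.factorial : ℝ) ≠ 0 := by positivity
  have h2n : 2 * n + a ≠ 0 := by
    have := poch_ne_zero_iff.1 ha (2 * n) (by omega)
    push_cast at this
    rwa [add_comm]
  have hb' := poch_ne_zero_of_le hb (Nat.succ_le_of_lt hn)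
  have hc' := poch_ne_zero_of_le hc (Nat.succ_le_of_lt hn)
  have haM : poch (1 + a + M) (n + 1) ≠ 0 := poch_one_add_add_ne_zero ha (by omega)
  rw [poch_succ, mul_ne_zero_iff] at hb' hc' haM
  obtain ⟨hb₁, hb₂⟩ := hb'
  obtain ⟨hc₁, hc₂⟩ := hc'
  obtain ⟨haM₁, haM₂⟩ := haM
  simp only [veryWellPoisedTerm, poch_succ, Nat.factorial_succ, Nat.cast_mul, Nat.cast_succ]
  field_simp
  ring

lemma veryWellPoisedCert_zero (ha : poch a (2 * M + 3) ≠ 0) :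
    (1 + a - b + M) * (1 + a - c + M) * veryWellPoisedTerm a b c (M + 1) 0 -
        (1 + a + M) * (1 + a - b - c + M) * veryWellPoisedTerm a b c M 0 =
      veryWellPoisedCert a b c M 0 := by
  have ha₀ := ne_zero_of_poch_ne_zero ha
  have haM : 1 + a + M ≠ 0 :=
    ne_zero_of_poch_ne_zero (poch_one_add_add_ne_zero (k := 1) ha (by omega))
  simp only [veryWellPoisedTerm_zero ha₀, veryWellPoisedCert, poch_succ, poch_zero, Nat.factorial,
    Nat.cast_zero, Nat.cast_one, add_zero]
  field_simp
  ring

lemma veryWellPoisedCert_succ_sub (ha : poch a (2 * M + 3) ≠ 0)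
    (hb : poch (1 + a - b) (M + 1) ≠ 0) (hc : poch (1 + a - c) (M + 1) ≠ 0) {n : ℕ} (hn : n ≤ M) :
    (1 + a - b + M) * (1 + a - c + M) * veryWellPoisedTerm a b c (M + 1) (n + 1) -
        (1 + a + M) * (1 + a - b - c + M) * veryWellPoisedTerm a b c M (n + 1) =
      veryWellPoisedCert a b c M (n + 1) - veryWellPoisedCert a b c M n := by
  have ha₀ := ne_zero_of_poch_ne_zero ha
  have hn₁ : (n : ℝ) + 1 ≠ 0 := by positivity
  have hfact : (n.factorial : ℝ) ≠ 0 := by positivity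
  have haM : poch (1 + a + M) (n + 2) ≠ 0 := poch_one_add_add_ne_zero ha (by omega)
  have haM₀ := ne_zero_of_poch_ne_zero haM
  have hshift : poch (1 + a + (M + 1 : ℕ)) (n + 1) = poch (1 + a + M) (n + 2) / (1 + a + M) := by
    rw [poch_succ_left (1 + a + M), mul_div_cancel_left₀ _ haM₀, Nat.cast_succ, ← add_assoc]
  have hneg : poch (-(M + 1 : ℕ)) (n + 1) = -(M + 1) * poch (-(M : ℝ)) n := by
    rw [poch_succ_left, Nat.cast_succ, neg_add, neg_add_cancel_right, ← neg_add]
  have hb' := poch_ne_zero_of_le hb (Nat.succ_le_succ hn)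
  have hc' := poch_ne_zero_of_le hc (Nat.succ_le_succ hn)
  rw [poch_succ, poch_succ, mul_ne_zero_iff, mul_ne_zero_iff] at haM
  rw [poch_succ, mul_ne_zero_iff] at hb' hc'
  obtain ⟨⟨haM₁, haM₂⟩, haM₃⟩ := haM
  obtain ⟨hb₁, hb₂⟩ := hb'
  obtain ⟨hc₁, hc₂⟩ := hc'
  rw [Nat.cast_succ] at haM₃
  rw [veryWellPoisedTerm, hshift, hneg]
  simp only [veryWellPoisedTerm, veryWellPoisedCert, poch_succ, Nat.factorial_succ, Nat.cast_mul,
    Nat.cast_succ]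
  field_simp
  ring

lemma sum_veryWellPoisedTerm_recurrence (ha : poch a (2 * M + 3) ≠ 0)
    (hb : poch (1 + a - b) (M + 1) ≠ 0) (hc : poch (1 + a - c) (M + 1) ≠ 0) :
    (1 + a - b + M) * (1 + a - c + M) *
        ∑ n ∈ Finset.range (M + 2), veryWellPoisedTerm a b c (M + 1) n =
      (1 + a + M) * (1 + a - b - c + M) *
        ∑ n ∈ Finset.range (M + 1), veryWellPoisedTerm a b c M n := by
  have hcert : veryWellPoisedCert a b c M (M + 1) = 0 := by
    simp [veryWellPoisedCert, poch_neg_natCast_eq_zero M.lt_succ_self]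
  have htelescope := Finset.sum_range_sub (veryWellPoisedCert a b c M) (M + 1)
  rw [← Finset.sum_congr rfl fun n hn ↦ veryWellPoisedCert_succ_sub ha hb hc
    (Nat.lt_succ_iff.1 (Finset.mem_range.1 hn)), hcert, ← veryWellPoisedCert_zero ha,
    Finset.sum_sub_distrib, ← Finset.mul_sum, ← Finset.mul_sum] at htelescope
  have hlast : ∑ n ∈ Finset.range (M + 1), veryWellPoisedTerm a b c M n =
      ∑ n ∈ Finset.range (M + 2), veryWellPoisedTerm a b c M n := by
    rw [Finset.sum_range_succ _ (M + 1), veryWellPoisedTerm_eq_zero M.lt_succ_self, add_zero]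
  rw [hlast, Finset.sum_range_succ', Finset.sum_range_succ' _ (M + 1)]
  linear_combination htelescope

theorem sum_veryWellPoisedTerm (ha : poch a (2 * M + 1) ≠ 0) (hb : poch (1 + a - b) M ≠ 0)
    (hc : poch (1 + a - c) M ≠ 0) :
    (∑ n ∈ Finset.range (M + 1), veryWellPoisedTerm a b c M n) *
        (poch (1 + a - b) M * poch (1 + a - c) M) =
      poch (1 + a) M * poch (1 + a - b - c) M := by
  induction M with
  | zero => simp [veryWellPoisedTerm_zero (ne_zero_of_poch_ne_zero ha), poch_zero]
  | succ M ih =>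
    have ih := ih (poch_ne_zero_of_le ha (by omega)) (poch_ne_zero_of_le hb M.le_succ)
      (poch_ne_zero_of_le hc M.le_succ)
    simp only [poch_succ _ M]
    linear_combination poch (1 + a - b) M * poch (1 + a - c) M *
      sum_veryWellPoisedTerm_recurrence ha hb hc + (1 + a + M) * (1 + a - b - c + M) * ih

end VeryWellPoised

section Positivity

variable {M : ℕ} {x y z : ℝ}

/-- The positivity of the products `B_i D_{i+1}` in the parameters
`(α, β, δ) = (x, y, M + x + z + 1)`. As a quotient by `0` is `0`, it makes all the linear factors
of `B_i` and `D_{i+1}` nonzero, those of the denominators included. -/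
def RacahRatesPos (M : ℕ) (x y z : ℝ) : Prop :=
  ∀ i < M, 0 < racahBirth M x y z i * racahDeath M x y z (i + 1)

namespace RacahRatesPos

lemma birth_factors_ne_zero (h : RacahRatesPos M x y z) {i : ℕ} (hi : i < M) :
    i + x + 1 ≠ 0 ∧ i + x + y + z + M + 2 ≠ 0 ∧ i + x + z + 1 ≠ 0 ∧
      2 * i + x + z + 1 ≠ 0 ∧ 2 * i + x + z + 2 ≠ 0 := by
  have hne := left_ne_zero_of_mul (h i hi).ne'
  simp only [racahBirth, div_ne_zero_iff, mul_ne_zero_iff] at hne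
  tauto

lemma death_factors_ne_zero (h : RacahRatesPos M x y z) {i : ℕ} (hi : i < M) :
    (i + 1 : ℕ) + z ≠ 0 ∧ (i + 1 : ℕ) - M - 1 - y ≠ 0 ∧ (i + 1 : ℕ) + M + x + z + 1 ≠ 0 := by
  have hne := right_ne_zero_of_mul (h i hi).ne'
  simp only [racahDeath, div_ne_zero_iff, mul_ne_zero_iff] at hne
  tauto

lemma poch_left_ne_zero (h : RacahRatesPos M x y z) : poch (x + 1) M ≠ 0 :=
  poch_ne_zero_iff.2 fun i hi ↦ by
    convert (h.birth_factors_ne_zero hi).1 using 1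
    ring

lemma poch_sum_ne_zero (h : RacahRatesPos M x y z) : poch (x + y + z + M + 2) M ≠ 0 :=
  poch_ne_zero_iff.2 fun i hi ↦ by
    convert (h.birth_factors_ne_zero hi).2.1 using 1
    ring

lemma poch_right_ne_zero (h : RacahRatesPos M x y z) : poch (z + 1) M ≠ 0 :=
  poch_ne_zero_iff.2 fun i hi ↦ by
    convert (h.death_factors_ne_zero hi).1 using 1
    push_cast
    ring

lemma poch_neg_sub_ne_zero (h : RacahRatesPos M x y z) : poch (-y - M) M ≠ 0 :=
  poch_ne_zero_iff.2 fun i hi ↦ by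
    convert (h.death_factors_ne_zero hi).2.1 using 1
    push_cast
    ring

lemma poch_add_ne_zero (h : RacahRatesPos M x y z) (hM : 0 < M) :
    poch (x + z + 1) (2 * M + 1) ≠ 0 := by
  refine poch_ne_zero_iff.2 fun t ht ↦ ?_
  rcases lt_trichotomy t M with hlt | rfl | hgt
  · convert (h.birth_factors_ne_zero hlt).2.2.1 using 1
    ring
  · rcases t.even_or_odd' with ⟨i, rfl | rfl⟩
    · convert (h.birth_factors_ne_zero (i := i) (by omega)).2.2.2.1 using 1
      push_cast
      ring
    · convert (h.birth_factors_ne_zero (i := i) (by omega)).2.2.2.2 using 1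
      push_cast
      ring
  · obtain ⟨i, rfl⟩ := Nat.exists_eq_add_of_lt hgt
    convert (h.death_factors_ne_zero (i := i) (by omega)).2.2 using 1
    push_cast
    ring

end RacahRatesPos

lemma kappa_eq : kappa M x y (M + x + z + 1) =
    poch (y + 1) M * poch (z + 1) M / (poch (x + y + 2) M * poch (x + z + 2) M) := by
  have hz : poch (x - (M + x + z + 1) + 1) M = (-1) ^ M * poch (z + 1) M := by
    rw [← poch_reflect]
    ring_nf
  have hxz : poch (-(M + x + z + 1)) M = (-1) ^ M * poch (x + z + 2) M := by
    rw [show x + z + 2 = x + z + 1 + 1 by ring, ← poch_reflect]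
    ring_nf
  rw [kappa, hz, hxz, mul_assoc, mul_left_comm _ ((-1) ^ M), mul_comm (poch (z + 1) M),
    mul_div_mul_left _ _ (pow_ne_zero M (neg_ne_zero.2 one_ne_zero))]

lemma kappa_swap : kappa M x y (M + x + z + 1) = kappa M x z (M + x + y + 1) := by
  rw [kappa_eq, kappa_eq, mul_comm (poch (y + 1) M), mul_comm (poch (x + y + 2) M)]

lemma posCond_iff : PosCond M x y (M + x + z + 1) ↔
    RacahRatesPos M x z y ∧ RacahRatesPos M x y z ∧ 0 < kappa M x y (M + x + z + 1) := by
  simp only [PosCond, coeffA_eq_racahBirth, coeffC_eq_racahDeath, coeffB_eq_racahBirth,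
    coeffD_eq_racahDeath, RacahRatesPos]

end Positivity

section RacahMatrix

variable {M : ℕ} {x y z : ℝ}

/-- The matrix of orthonormalized Racah functions in the parameters
`(α, β, δ) = (x, y, M + x + z + 1)`, with rows indexed by the degree. -/
def racahMatrix (M : ℕ) (x y z : ℝ) : Matrix (Fin (M + 1)) (Fin (M + 1)) ℝ :=
  Matrix.of fun n m ↦ Pfun M x y (M + x + z + 1) n m

/-- The symmetrized Racah difference operator in the parameters
`(α, β, δ) = (x, y, M + x + z + 1)`. -/
def racahJacobi (M : ℕ) (x y z : ℝ) : Matrix (Fin (M + 1)) (Fin (M + 1)) ℝ :=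
  jacobiMatrix M (racahBirth M x y z) (racahDeath M x y z)

/-- The square root of the Racah weight, without its constant factor. -/
def racahSymmetrizer (M : ℕ) (x y z : ℝ) : ℕ → ℝ :=
  symmetrizer (racahBirth M x y z) (racahDeath M x y z)

lemma racahSymmetrizer_zero : racahSymmetrizer M x y z 0 = 1 := by
  rw [racahSymmetrizer, symmetrizer, Finset.prod_range_zero]

/-- The diagonal matrix with entries `i (i + s + 1)`; for `s = x + y` they are the eigenvalues of
the Racah difference operator. -/
def racahSpectrum (M : ℕ) (s : ℝ) : Matrix (Fin (M + 1)) (Fin (M + 1)) ℝ :=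
  Matrix.diagonal fun i ↦ i * (i + (s + 1))

lemma racahSpectrum_injective {s : ℝ} (hs : poch (s + 1) (2 * M + 1) ≠ 0) :
    Function.Injective fun i : Fin (M + 1) ↦ (i : ℝ) * (i + (s + 1)) := by
  intro i j hij
  have hfactor : ((i : ℝ) - j) * (s + 1 + (i + j : ℕ)) = 0 := by
    push_cast
    linear_combination hij
  have hsub := (mul_eq_zero.1 hfactor).resolve_right (poch_ne_zero_iff.1 hs (i + j) (by omega))
  exact Fin.ext (Nat.cast_injective (sub_eq_zero.1 hsub))

lemma racahMatrix_apply (n m : Fin (M + 1)) : racahMatrix M x y z n m =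
    √(kappa M x y (M + x + z + 1)) * racahSymmetrizer M x z y n * racahSymmetrizer M x y z m *
      racahFun M x y z n m := by
  simp only [racahMatrix, Matrix.of_apply, Pfun, racahSymmetrizer, symmetrizer,
    coeffA_eq_racahBirth, coeffC_eq_racahDeath, coeffB_eq_racahBirth, coeffD_eq_racahDeath,
    racah_eq_racahFun _ (Nat.lt_succ_iff.1 n.isLt)]

lemma racahMatrix_transpose : (racahMatrix M x y z).transpose = racahMatrix M x z y := by
  ext m n
  rw [Matrix.transpose_apply, racahMatrix_apply, racahMatrix_apply, kappa_swap, racahFun_swap]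
  ring

lemma racahOperator_eq_natCast (i : ℕ) (f : ℝ → ℝ) : racahOperator M x y z i f =
    racahBirth M x y z i * (f (i + 1 : ℕ) - f i) +
      racahDeath M x y z i * (f (i - 1 : ℕ) - f i) := by
  cases i with
  | zero => simp [racahOperator, racahDeath_zero]
  | succ i => simp [racahOperator]

lemma racahJacobi_mulVec_racahSymmetrizer (h : RacahRatesPos M x y z) (f : ℝ → ℝ)
    (i : Fin (M + 1)) :
    (racahJacobi M x y z).mulVec (fun j ↦ racahSymmetrizer M x y z j * f j) i =
      racahSymmetrizer M x y z i * racahOperator M x y z i f := by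
  rw [racahOperator_eq_natCast]
  exact jacobiMatrix_mulVec_symmetrizer racahBirth_self racahDeath_zero h (fun j ↦ f j) i

theorem racahMatrix_semiconjBy_spectrum (h : RacahRatesPos M x z y) (hM : 0 < M) :
    SemiconjBy (racahMatrix M x y z) (racahSpectrum M (x + z)) (racahJacobi M x z y) := by
  ext n m
  set c := √(kappa M x y (M + x + z + 1)) * racahSymmetrizer M x y z m
  have happly (j : Fin (M + 1)) : racahMatrix M x y z j m =
      racahSymmetrizer M x z y j * (c • racahFun M x z y m) j := by
    rw [racahMatrix_apply, racahFun_swap, Pi.smul_apply, smul_eq_mul]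
    ring
  have hmul : (racahJacobi M x z y * racahMatrix M x y z) n m =
      (racahJacobi M x z y).mulVec (fun j ↦ racahMatrix M x y z j m) n := rfl
  have heigen := racahOperator_racahFun (h.poch_add_ne_zero hM) h.poch_left_ne_zero
    h.poch_sum_ne_zero (Nat.lt_succ_iff.1 m.isLt) (Nat.lt_succ_iff.1 n.isLt)
  rw [racahSpectrum, Matrix.mul_diagonal, hmul, funext happly,
    racahJacobi_mulVec_racahSymmetrizer h, map_smul, heigen, happly]
  simp only [Pi.smul_apply, smul_eq_mul]
  ring

theorem racahMatrix_semiconjBy_jacobi (h : RacahRatesPos M x y z) (hM : 0 < M) :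
    SemiconjBy (racahMatrix M x y z) (racahJacobi M x y z) (racahSpectrum M (x + y)) := by
  have htranspose := congrArg Matrix.transpose (racahMatrix_semiconjBy_spectrum h hM).eq
  rw [Matrix.transpose_mul, Matrix.transpose_mul, racahMatrix_transpose, racahJacobi,
    jacobiMatrix_isSymm.eq, racahSpectrum, Matrix.diagonal_transpose] at htranspose
  exact htranspose.symm

end RacahMatrix

section Orthogonality

variable {M : ℕ} {x y z : ℝ}

lemma racahBirth_div_racahDeath (h : RacahRatesPos M x z y) {n : ℕ} (hn : n < M) :
    racahBirth M x z y n / racahDeath M x z y (n + 1) =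
      (x + y + 1 + n) * (x + 1 + n) * (x + y + z + M + 2 + n) * (n - M) *
          (2 * n + (x + y + 1) + 2) /
        ((n + 1) * (1 + (x + y + 1) - (x + 1) + n) * (1 + (x + y + 1) - (x + y + z + M + 2) + n) *
          (1 + (x + y + 1) + M + n) * (2 * n + (x + y + 1))) := by
  obtain ⟨-, -, -, -, hden⟩ := h.birth_factors_ne_zero hn
  have hbirth : racahBirth M x z y n =
      (x + y + 1 + n) * (x + 1 + n) * (x + y + z + M + 2 + n) * (n - M) /
        (2 * n + (x + y + 1)) / (2 * n + x + y + 2) := by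
    rw [racahBirth, div_div]
    congr 1 <;> ring
  have hdeath : racahDeath M x z y (n + 1) =
      ((n + 1) * (1 + (x + y + 1) - (x + 1) + n) * (1 + (x + y + 1) - (x + y + z + M + 2) + n) *
        (1 + (x + y + 1) + M + n)) / (2 * n + (x + y + 1) + 2) / (2 * n + x + y + 2) := by
    rw [racahDeath, div_div]
    push_cast
    congr 1 <;> ring
  rw [hbirth, hdeath, div_div_div_cancel_right₀ hden, div_div_div_eq,
    mul_comm (2 * (n : ℝ) + (x + y + 1))]

lemma racahSymmetrizer_sq (h : RacahRatesPos M x z y) (hM : 0 < M) {n : ℕ} (hn : n ≤ M) :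
    racahSymmetrizer M x z y n ^ 2 =
      veryWellPoisedTerm (x + y + 1) (x + 1) (x + y + z + M + 2) M n := by
  have hxy := h.poch_add_ne_zero hM
  have hy : poch (1 + (x + y + 1) - (x + 1)) M ≠ 0 := by
    convert h.poch_right_ne_zero using 2
    ring
  have hz : poch (1 + (x + y + 1) - (x + y + z + M + 2)) M ≠ 0 := by
    convert h.poch_neg_sub_ne_zero using 2
    ring
  induction n with
  | zero =>
    rw [racahSymmetrizer_zero, one_pow, veryWellPoisedTerm_zero (ne_zero_of_poch_ne_zero hxy)]
  | succ n ih =>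
    rw [veryWellPoisedTerm_succ hxy hy hz hn, ← racahBirth_div_racahDeath h hn,
      ← ih (by omega), racahSymmetrizer, symmetrizer_succ_sq (h n hn)]

lemma kappa_mul_sum_racahSymmetrizer_sq (h : PosCond M x y (M + x + z + 1)) (hM : 0 < M) :
    kappa M x y (M + x + z + 1) *
      ∑ n ∈ Finset.range (M + 1), racahSymmetrizer M x z y n ^ 2 = 1 := by
  obtain ⟨hrates, -, hκ⟩ := posCond_iff.1 h
  have hy : 1 + (x + y + 1) - (x + 1) = y + 1 := by ring
  have hz : 1 + (x + y + 1) - (x + y + z + M + 2) = -z - M := by ring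
  have hsum := sum_veryWellPoisedTerm (hrates.poch_add_ne_zero hM)
    (b := x + 1) (c := x + y + z + M + 2) (hy ▸ hrates.poch_right_ne_zero)
    (hz ▸ hrates.poch_neg_sub_ne_zero)
  rw [hy, hz, show 1 + (x + y + 1) = x + y + 2 by ring,
    show y + 1 - (x + y + z + M + 2) = -(M + x + z + 1) by ring] at hsum
  rw [Finset.sum_congr rfl fun n hn ↦
    racahSymmetrizer_sq hrates hM (Nat.lt_succ_iff.1 (Finset.mem_range.1 hn))]
  rw [kappa, show x - (M + x + z + 1) + 1 = -z - M by ring] at hκ ⊢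
  rw [div_mul_eq_mul_div, div_eq_one_iff_eq (div_ne_zero_iff.1 hκ.ne').2]
  linear_combination hsum

lemma racahMatrix_transpose_mul_self_zero_zero (h : PosCond M x y (M + x + z + 1)) (hM : 0 < M) :
    ((racahMatrix M x y z).transpose * racahMatrix M x y z) 0 0 = 1 := by
  have hκ := (posCond_iff.1 h).2.2
  have hentry (n : Fin (M + 1)) : racahMatrix M x y z n 0 * racahMatrix M x y z n 0 =
      kappa M x y (M + x + z + 1) * racahSymmetrizer M x z y n ^ 2 := by
    rw [racahMatrix_apply, Fin.val_zero, Nat.cast_zero, racahFun_zero_right,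
      racahSymmetrizer_zero]
    linear_combination racahSymmetrizer M x z y n ^ 2 * Real.mul_self_sqrt hκ.le
  simp only [Matrix.mul_apply, Matrix.transpose_apply, hentry]
  rw [← Finset.mul_sum, Fin.sum_univ_eq_sum_range (fun n ↦ racahSymmetrizer M x z y n ^ 2),
    kappa_mul_sum_racahSymmetrizer_sq h hM]

lemma racahJacobi_castSucc_succ_ne_zero (h : RacahRatesPos M x y z) (i : Fin M) :
    racahJacobi M x y z i.castSucc i.succ ≠ 0 := by
  rw [racahJacobi, jacobiMatrix_castSucc_succ]
  exact (Real.sqrt_pos.2 (h i i.isLt)).ne'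

theorem racahMatrix_mem_orthogonalGroup (h : PosCond M x y (M + x + z + 1)) (hM : 0 < M) :
    racahMatrix M x y z ∈ Matrix.orthogonalGroup (Fin (M + 1)) ℝ := by
  obtain ⟨hxzy, hxyz, -⟩ := posCond_iff.1 h
  have hspectrum : Commute ((racahMatrix M x y z).transpose * racahMatrix M x y z)
      (racahSpectrum M (x + z)) := by
    rw [racahMatrix_transpose]
    exact (racahMatrix_semiconjBy_jacobi hxzy hM).mul_left
      (racahMatrix_semiconjBy_spectrum hxzy hM)
  have hjacobi : Commute ((racahMatrix M x y z).transpose * racahMatrix M x y z)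
      (racahJacobi M x y z) := by
    rw [racahMatrix_transpose]
    exact (racahMatrix_semiconjBy_spectrum hxyz hM).mul_left
      (racahMatrix_semiconjBy_jacobi hxyz hM)
  have hscalar := eq_smul_one_of_commute (racahSpectrum_injective (hxyz.poch_add_ne_zero hM))
    (racahJacobi_castSucc_succ_ne_zero hxyz) hspectrum.symm hjacobi.symm
  rw [Matrix.mem_orthogonalGroup_iff', hscalar, racahMatrix_transpose_mul_self_zero_zero h hM,
    one_smul]

end Orthogonality

section RacahRelation

variable {M : ℕ} {x y z : ℝ}

lemma racahBirth_mul_racahDeath_reverse (i : ℕ) :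
    racahBirth M x y z i * racahDeath M x y z (i + 1) =
      racahBirth M z y x i * racahDeath M z y x (i + 1) := by
  simp only [racahBirth, racahDeath, div_mul_div_comm, Nat.cast_succ]
  congr 1 <;> ring

lemma racahBirth_add_reverse (hxz : poch (x + z + 1) (2 * M + 1) ≠ 0) {i : ℕ} (hi : i ≤ M) :
    racahBirth M x y z i + racahBirth M z y x i =
      (i + x + y + z + M + 2) * (i - M) * (i + x + z + 1) / (2 * i + x + z + 1) := by
  rcases hi.lt_or_eq with hlt | rfl
  · have h₁ := two_mul_add_ne_zero hxz hi
    have h₂ := two_mul_add_ne_zero_of_lt hxz hlt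
    rw [racahBirth, racahBirth, add_right_comm (2 * (i : ℝ)) z x, ← add_div,
      div_eq_div_iff (mul_ne_zero h₁ h₂) h₁]
    ring
  · simp [racahBirth_self]

lemma racahDeath_add_reverse (hxz : poch (x + z + 1) (2 * M + 1) ≠ 0) {i : ℕ} (hi : i ≤ M) :
    racahDeath M x y z i + racahDeath M z y x i =
      i * (i - M - 1 - y) * (i + M + x + z + 1) / (2 * i + x + z + 1) := by
  rcases i.eq_zero_or_pos with rfl | hpos
  · simp [racahDeath_zero]
  · have h₀ := two_mul_add_ne_zero_of_pos hxz hpos hi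
    have h₁ := two_mul_add_ne_zero hxz hi
    rw [racahDeath, racahDeath, add_right_comm (2 * (i : ℝ)) z x, ← add_div,
      div_eq_div_iff (mul_ne_zero h₀ h₁) h₁]
    ring

theorem racahJacobi_add_altSign_conj (hxz : poch (x + z + 1) (2 * M + 1) ≠ 0) :
    racahJacobi M x y z + altSign M * racahJacobi M z y x * altSign M + racahSpectrum M (x + z) =
      (M * (x + y + z + M + 2)) • (1 : Matrix (Fin (M + 1)) (Fin (M + 1)) ℝ) := by
  rw [racahJacobi, racahJacobi,
    jacobiMatrix_add_altSign_conj fun i _ ↦ racahBirth_mul_racahDeath_reverse i, racahSpectrum,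
    Matrix.diagonal_add, Matrix.smul_one_eq_diagonal]
  refine congrArg Matrix.diagonal (funext fun i ↦ ?_)
  have hi := Nat.lt_succ_iff.1 i.isLt
  have h₁ := two_mul_add_ne_zero hxz hi
  rw [add_add_add_comm, racahBirth_add_reverse hxz hi, racahDeath_add_reverse hxz hi,
    ← add_div, neg_add_eq_sub, sub_eq_iff_eq_add, ← sub_eq_iff_eq_add', eq_div_iff h₁]
  ring

/-- The Racah matrix with the columns of odd index negated. -/
def signedRacahMatrix (M : ℕ) (x y z : ℝ) : Matrix (Fin (M + 1)) (Fin (M + 1)) ℝ :=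
  racahMatrix M x y z * altSign M

lemma signedRacahMatrix_mem_orthogonalGroup (h : PosCond M x y (M + x + z + 1)) (hM : 0 < M) :
    signedRacahMatrix M x y z ∈ Matrix.orthogonalGroup (Fin (M + 1)) ℝ :=
  mul_mem (racahMatrix_mem_orthogonalGroup h hM) altSign_mem_orthogonalGroup

lemma signedRacahMatrix_semiconjBy_spectrum (h : RacahRatesPos M x z y) (hM : 0 < M) :
    SemiconjBy (signedRacahMatrix M x y z) (racahSpectrum M (x + z)) (racahJacobi M x z y) :=
  (racahMatrix_semiconjBy_spectrum h hM).mul_left (Matrix.commute_diagonal _ _)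

lemma signedRacahMatrix_semiconjBy_conj (h : RacahRatesPos M x y z) (hM : 0 < M) :
    SemiconjBy (signedRacahMatrix M x y z) (altSign M * racahJacobi M x y z * altSign M)
      (racahSpectrum M (x + y)) := by
  refine (racahMatrix_semiconjBy_jacobi h hM).mul_left ?_
  rw [SemiconjBy, ← mul_assoc, ← mul_assoc, altSign_mul_self, one_mul]

theorem signedRacahMatrix_semiconjBy_jacobi (h : PosCond M x y (M + x + z + 1)) (hM : 0 < M) :
    SemiconjBy (signedRacahMatrix M x y z) (racahJacobi M z y x)
      (altSign M * racahJacobi M y z x * altSign M) := by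
  obtain ⟨hxzy, hxyz, -⟩ := posCond_iff.1 h
  have hxy := hxzy.poch_add_ne_zero hM
  have hzx := hxyz.poch_add_ne_zero hM
  rw [add_comm x z] at hzx
  have hsource := eq_sub_of_add_eq (eq_sub_of_add_eq (racahJacobi_add_altSign_conj (y := y) hzx))
  have htarget := eq_sub_of_add_eq' (eq_sub_of_add_eq (racahJacobi_add_altSign_conj (y := z) hxy))
  rw [show z + y + x = x + y + z by ring, add_comm z x] at hsource
  rw [add_right_comm x z y] at htarget
  rw [hsource, htarget, sub_right_comm]
  exact (((SemiconjBy.one_right _).smul_right (M * (x + y + z + M + 2))).sub_right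
    (signedRacahMatrix_semiconjBy_conj hxyz hM)).sub_right
      (signedRacahMatrix_semiconjBy_spectrum hxzy hM)

/-- The product of the three signed Racah matrices around the cycle `(x, y, z) → (z, x, y) →
(y, z, x)` of parameters. -/
def racahTriangle (M : ℕ) (x y z : ℝ) : Matrix (Fin (M + 1)) (Fin (M + 1)) ℝ :=
  signedRacahMatrix M x y z * signedRacahMatrix M z x y * signedRacahMatrix M y z x

lemma signedRacahMatrix_apply (n m : Fin (M + 1)) :
    signedRacahMatrix M x y z n m = Pfun M x y (M + x + z + 1) n m * (-1) ^ (m : ℕ) := by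
  rw [signedRacahMatrix, altSign, Matrix.mul_diagonal, racahMatrix, Matrix.of_apply]

lemma racahTriangle_apply (n m : Fin (M + 1)) : racahTriangle M x y z n m =
    ∑ k1 ∈ Finset.range (M + 1), ∑ k2 ∈ Finset.range (M + 1), (-1) ^ (k1 + k2 + (m : ℕ)) *
      Pfun M x y (M + x + z + 1) n k1 * Pfun M z x (M + z + y + 1) k1 k2 *
        Pfun M y z (M + y + x + 1) k2 m := by
  rw [Finset.sum_comm]
  simp only [racahTriangle, Matrix.mul_apply, signedRacahMatrix_apply, Finset.sum_mul,
    ← Fin.sum_univ_eq_sum_range]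
  refine Finset.sum_congr rfl fun k2 _ ↦ Finset.sum_congr rfl fun k1 _ ↦ ?_
  rw [pow_add, pow_add]
  ring

lemma racahTriangle_commute_spectrum (h₁ : RacahRatesPos M x y z)
    (h₂ : PosCond M z x (M + z + y + 1)) (h₃ : RacahRatesPos M y x z) (hM : 0 < M) :
    Commute (racahTriangle M x y z) (racahSpectrum M (x + y)) := by
  have hlast := signedRacahMatrix_semiconjBy_spectrum h₃ hM
  rw [add_comm y x] at hlast
  exact ((signedRacahMatrix_semiconjBy_conj h₁ hM).mul_left
    (signedRacahMatrix_semiconjBy_jacobi h₂ hM)).mul_left hlast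

lemma racahTriangle_commute_jacobi (h₁ : RacahRatesPos M x z y) (h₂ : RacahRatesPos M z x y)
    (h₃ : PosCond M y z (M + y + x + 1)) (hM : 0 < M) :
    Commute (racahTriangle M x y z) (racahJacobi M x z y) := by
  have hmiddle := signedRacahMatrix_semiconjBy_conj h₂ hM
  rw [add_comm z x] at hmiddle
  exact ((signedRacahMatrix_semiconjBy_spectrum h₁ hM).mul_left hmiddle).mul_left
    (signedRacahMatrix_semiconjBy_jacobi h₃ hM)

lemma eq_one_or_eq_neg_one_of_smul_one_mem_orthogonalGroup {ι : Type*} [Fintype ι] [DecidableEq ι]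
    [Nonempty ι] {c : ℝ} (h : c • (1 : Matrix ι ι ℝ) ∈ Matrix.orthogonalGroup ι ℝ) :
    c = 1 ∨ c = -1 := by
  rw [Matrix.mem_orthogonalGroup_iff, Matrix.transpose_smul, Matrix.transpose_one, smul_mul_smul,
    mul_one] at h
  inhabit ι
  exact mul_self_eq_one_iff.1 (by simpa using congrFun₂ h default default)

theorem racahTriangle_eq_smul_one (h₁ : PosCond M x y (M + x + z + 1))
    (h₂ : PosCond M z x (M + z + y + 1)) (h₃ : PosCond M y z (M + y + x + 1)) :
    ∃ ε : ℝ, (ε = 1 ∨ ε = -1) ∧ racahTriangle M x y z = ε • 1 := by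
  rcases M.eq_zero_or_pos with rfl | hM
  · refine ⟨1, Or.inl rfl, ?_⟩
    ext n m
    rw [racahTriangle_apply, Fin.fin_one_eq_zero n, Fin.fin_one_eq_zero m]
    simp [Pfun, kappa, racah, poch_zero]
  obtain ⟨hxzy, hxyz, -⟩ := posCond_iff.1 h₁
  have hscalar := eq_smul_one_of_commute (racahSpectrum_injective (hxzy.poch_add_ne_zero hM))
    (racahJacobi_castSucc_succ_ne_zero hxzy)
    (racahTriangle_commute_spectrum hxyz h₂ (posCond_iff.1 h₃).1 hM).symm
    (racahTriangle_commute_jacobi hxzy (posCond_iff.1 h₂).2.1 h₃ hM).symm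
  have horth : racahTriangle M x y z ∈ Matrix.orthogonalGroup (Fin (M + 1)) ℝ :=
    mul_mem (mul_mem (signedRacahMatrix_mem_orthogonalGroup h₁ hM)
      (signedRacahMatrix_mem_orthogonalGroup h₂ hM)) (signedRacahMatrix_mem_orthogonalGroup h₃ hM)
  rw [hscalar] at horth
  exact ⟨_, eq_one_or_eq_neg_one_of_smul_one_mem_orthogonalGroup horth, hscalar⟩

end RacahRelation

theorem stmt14_general (M : ℕ) (x y z : ℝ) (h₁ : PosCond M x y (M + x + z + 1))
    (h₂ : PosCond M z x (M + z + y + 1)) (h₃ : PosCond M y z (M + y + x + 1)) :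
    ∃ ε : ℝ, (ε = 1 ∨ ε = -1) ∧ ∀ n m : ℕ, n ≤ M → m ≤ M →
      ∑ k1 ∈ Finset.range (M + 1), ∑ k2 ∈ Finset.range (M + 1), (-1 : ℝ) ^ (k1 + k2 + m) *
        Pfun M x y (M + x + z + 1) n k1 * Pfun M z x (M + z + y + 1) k1 k2 *
          Pfun M y z (M + y + x + 1) k2 m = ε * (if n = m then 1 else 0) := by
  obtain ⟨ε, hε, htriangle⟩ := racahTriangle_eq_smul_one h₁ h₂ h₃
  refine ⟨ε, hε, fun n m hn hm ↦ ?_⟩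
  have hentry := racahTriangle_apply (x := x) (y := y) (z := z)
    (⟨n, Nat.lt_succ_of_le hn⟩ : Fin (M + 1)) ⟨m, Nat.lt_succ_of_le hm⟩
  simpa [htriangle, Matrix.one_apply] using hentry.symm

/-- The Racah relation: the product of the three transition matrices around a triangular
face of the folded icosidodecahedron is, up to a global sign, the identity. -/
theorem stmt14 (j0 j1 j2 j3 j4 : ℝ) (N : ℕ)
    (h12 : j1 ≥ j2) (h24 : j2 ≥ j4) (h04 : j0 ≥ j4)
    (h0 : j0 ≥ 0) (h1 : j1 ≥ 0) (h2 : j2 ≥ 0) (h3 : j3 ≥ 0) (h4 : j4 ≥ 0)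
    (hup : j1 + j2 + j0 + j4 ≥ j3) (hlow : j3 ≥ j1 + j2 + j0 - j4)
    (hN : 0 < N) (hNdef : (N : ℝ) = j1 + j2 - j3 + j4 + j0)
    (hpos1 : ∀ p : ℕ, p ≤ N →
      PosCond (N - p) (-2*j2 - 1) (-2*j1 - 1) ((N : ℝ) - p - 2*j2 + 2*j3 + 1))
    (hpos2 : ∀ p : ℕ, p ≤ N →
      PosCond (N - p) (2*j3 + 1) (-2*j2 - 1) ((N : ℝ) - p - 2*j1 + 2*j3 + 1))
    (hpos3 : ∀ p : ℕ, p ≤ N →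
      PosCond (N - p) (-2*j1 - 1) (2*j3 + 1) ((N : ℝ) - p - 2*j1 - 2*j2 - 1)) :
    ∀ p : ℕ, p ≤ N → ∃ ε : ℝ, (ε = 1 ∨ ε = -1) ∧
      ∀ n m : ℕ, n ≤ N - p → m ≤ N - p →
        (∑ k1 ∈ Finset.range (N - p + 1), ∑ k2 ∈ Finset.range (N - p + 1),
          (-1 : ℝ) ^ (k1 + k2 + m) *
            Pfun (N - p) (-2*j2 - 1) (-2*j1 - 1) ((N : ℝ) - p - 2*j2 + 2*j3 + 1) n k1 *
            Pfun (N - p) (2*j3 + 1) (-2*j2 - 1) ((N : ℝ) - p - 2*j1 + 2*j3 + 1) k1 k2 *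
            Pfun (N - p) (-2*j1 - 1) (2*j3 + 1) ((N : ℝ) - p - 2*j1 - 2*j2 - 1) k2 m)
          = ε * (if n = m then 1 else 0) := by
  intro p hp
  have hδ₁ : (N : ℝ) - p - 2*j2 + 2*j3 + 1 = (N - p : ℕ) + (-2*j2 - 1) + (2*j3 + 1) + 1 := by
    rw [Nat.cast_sub hp]; ring
  have hδ₂ : (N : ℝ) - p - 2*j1 + 2*j3 + 1 = (N - p : ℕ) + (2*j3 + 1) + (-2*j1 - 1) + 1 := by
    rw [Nat.cast_sub hp]; ring
  have hδ₃ : (N : ℝ) - p - 2*j1 - 2*j2 - 1 = (N - p : ℕ) + (-2*j1 - 1) + (-2*j2 - 1) + 1 := by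
    rw [Nat.cast_sub hp]; ring
  rw [hδ₁, hδ₂, hδ₃]
  exact stmt14_general _ _ _ _ (hδ₁ ▸ hpos1 p hp) (hδ₂ ▸ hpos2 p hp) (hδ₃ ▸ hpos3 p hp)
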